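/- The saturation of J_n + ⟨p_n⟩ with respect to the product of all variables equals J_n together with the polynomials p^+_{n,j}: ( J_n + ⟨p_n⟩ ) : ( ∏_{(j,k) ∈ P} x_{jk} )^∞ = J_n + ⟨ p^+_{n,j} : j ∈ [n] ⟩. In particular, for n even the right-hand side is J_n + ⟨p^+_n⟩ with the single polynomial p^+_n. -/

import Mathlib

open scoped BigOperators

namespace Veronese

open MvPolynomial

/-- `c m = C(m,2)`. -/
def c (m : ℕ) : ℕ := m.choose 2

variable (n : ℕ)

/-- multiplicity (as ℤ) of the index `i` in the unordered pair `s`. -/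
def wt (s : Sym2 (Fin n)) : Fin n → ℤ :=
  Sym2.lift ⟨fun a b i => (if i = a then 1 else 0) + (if i = b then 1 else 0),
    fun a b => funext fun i => add_comm _ _⟩ s

/-- The Veronese grading map `V_n : ℤ^P → ℤ^n`, sending `e_{ij} ↦ e_i + e_j`. -/
def Vmap : (Sym2 (Fin n) → ℤ) →ₗ[ℤ] (Fin n → ℤ) where
  toFun u := fun i => ∑ s : Sym2 (Fin n), u s * wt n s i
  map_add' u v := funext fun i => by
    simp [add_mul, Finset.sum_add_distrib]
  map_smul' m u := funext fun i => by
    simp [Finset.mul_sum, smul_eq_mul, mul_assoc]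

/-- The Veronese lattice `L_n = ker V_n`. -/
def Llat : Submodule ℤ (Sym2 (Fin n) → ℤ) := LinearMap.ker (Vmap n)

/-- standard basis vector `e_{ij}` of `ℤ^P`. -/
def e (i j : Fin n) : Sym2 (Fin n) → ℤ := Pi.single s(i, j) 1

lemma e_comm (i j : Fin n) : e n i j = e n j i := by
  unfold e; rw [Sym2.eq_swap]

/-- `[ij|ij] = e_{ii} + e_{jj} - 2 e_{ij}`. -/
def minorVec (i j : Fin n) : Sym2 (Fin n) → ℤ := e n i i + e n j j - 2 • e n i j

/-- The principal minor lattice `L'_n`. -/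
def L'lat : Submodule ℤ (Sym2 (Fin n) → ℤ) :=
  Submodule.span ℤ {v | ∃ i j : Fin n, i < j ∧ v = minorVec n i j}

/-- the last index `n` (zero-based: `n-1`) of `Fin n`. -/
def lastIdx (hn : 0 < n) : Fin n := ⟨n - 1, Nat.sub_lt hn one_pos⟩

/-- embedding `[n-1] → [n]`. -/
def ι : Fin (n - 1) → Fin n := Fin.castLE (Nat.sub_le n 1)

/-- `[in|jn] = e_{ij} + e_{nn} - e_{in} - e_{jn}` for `i,j ∈ [n-1]`. -/
def Bvec (hn : 0 < n) : Sym2 (Fin (n - 1)) → (Sym2 (Fin n) → ℤ) :=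
  Sym2.lift ⟨fun i j =>
      e n (ι n i) (ι n j) + e n (lastIdx n hn) (lastIdx n hn)
        - e n (ι n i) (lastIdx n hn) - e n (ι n j) (lastIdx n hn),
    fun i j => by dsimp only; rw [e_comm n (ι n i) (ι n j)]; ring⟩

/-- The family `B'`: `[in|in]` on the diagonal, `2[in|jn]` off it. -/
noncomputable def B'vec (hn : 0 < n) (s : Sym2 (Fin (n - 1))) : Sym2 (Fin n) → ℤ :=
  if s.IsDiag then Bvec n hn s else 2 • Bvec n hn s

/-- multiplicity (as ℕ) of the index `i` in the unordered pair `s`. -/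
def wtN (s : Sym2 (Fin n)) : Fin n → ℕ :=
  Sym2.lift ⟨fun a b i => (if i = a then 1 else 0) + (if i = b then 1 else 0),
    fun a b => funext fun i => add_comm _ _⟩ s

/-- The Veronese degree of an exponent vector `u ∈ ℕ^P`. -/
def VN (u : Sym2 (Fin n) →₀ ℕ) : Fin n → ℕ := fun i => ∑ s : Sym2 (Fin n), u s * wtN n s i

/-- The fiber `V_n^{-1}[b] = {u ∈ ℕ^P : V_n u = b}`. -/
def fiber (b : Fin n → ℕ) : Set (Sym2 (Fin n) →₀ ℕ) := {u | VN n u = b}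

/-- natural inclusion `ℕ^P → ℤ^P`. -/
def toZ (u : Sym2 (Fin n) →₀ ℕ) : Sym2 (Fin n) → ℤ := fun s => (u s : ℤ)

lemma fiber_finite (b : Fin n → ℕ) : (fiber n b).Finite := by
  classical
  have hsub : fiber n b ⊆
      ↑(Finset.Iic ((Finsupp.equivFunOnFinite.symm fun _ => ∑ i, b i) : Sym2 (Fin n) →₀ ℕ)) := by
    intro u hu
    simp only [Finset.coe_Iic, Set.mem_Iic, Finsupp.le_def]
    intro s
    induction s using Sym2.ind with
    | _ i j =>
      have h1 : u s(i, j) * wtN n s(i, j) i ≤ VN n u i :=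
        Finset.single_le_sum (f := fun s => u s * wtN n s i)
          (fun s _ => Nat.zero_le _) (Finset.mem_univ s(i, j))
      have h2 : 1 ≤ wtN n s(i, j) i := by
        simp only [wtN, Sym2.lift_mk, if_pos rfl]
        exact Nat.le_add_right 1 _
      have h3 : u s(i, j) ≤ b i := by
        have hb : VN n u i = b i := congrFun hu i
        calc u s(i, j) ≤ u s(i, j) * wtN n s(i, j) i := Nat.le_mul_of_pos_right _ h2
          _ ≤ VN n u i := h1
          _ = b i := hb
      calc u s(i, j) ≤ b i := h3
        _ ≤ ∑ i, b i := Finset.single_le_sum (fun _ _ => Nat.zero_le _) (Finset.mem_univ _)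
        _ = (Finsupp.equivFunOnFinite.symm fun _ => ∑ i, b i) s(i, j) := by
            simp
  exact Set.Finite.subset (Finset.finite_toSet _) hsub

variable (k : Type*) [Field k]

/-- the polynomial ring `k[x_{ij}]`. -/
abbrev R := MvPolynomial (Sym2 (Fin n)) k

/-- The principal minor ideal `J_n`. -/
noncomputable def Jideal : Ideal (R n k) :=
  Ideal.span {f | ∃ i j : Fin n, i < j ∧ f = X s(i, i) * X s(j, j) - X s(i, j) ^ 2}

/-- The map `x_{ij} ↦ t_i t_j`. -/
noncomputable def veroHom : R n k →ₐ[k] MvPolynomial (Fin n) k :=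
  aeval fun s => Sym2.lift ⟨fun a b => X a * X b, fun a b => mul_comm _ _⟩ s

/-- The second Veronese ideal `I_n`. -/
noncomputable def Iideal : Ideal (R n k) := RingHom.ker (veroHom n k)

/-- A ℤ₂-twisting: an automorphism sending each variable to ± itself. -/
def IsTwisting (φ : R n k ≃ₐ[k] R n k) : Prop :=
  ∀ s : Sym2 (Fin n), φ (X s) = X s ∨ φ (X s) = - X s

/-- `f` is V_n-homogeneous of degree `b`. -/
def VHomog (f : R n k) (b : Fin n → ℕ) : Prop := ∀ u ∈ f.support, VN n u = b

/-- The fiber over `b` as a finite set. -/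
noncomputable def fiberFinset (b : Fin n → ℕ) : Finset (Sym2 (Fin n) →₀ ℕ) :=
  (fiber_finite n b).toFinset

/-- generating function of the canonical (0/1 off-diagonal) representatives of
the fiber over `b`. -/
noncomputable def pplusAt (b : Fin n → ℕ) : R n k :=
  ∑ u ∈ (fiberFinset n b).filter (fun u => ∀ s : Sym2 (Fin n), ¬s.IsDiag → u s ≤ 1),
    monomial u (1 : k)

/-- `p⁺_{n,j}` (for `n` odd): fiber over `(n-2,…,n-2) + e_j`. -/
noncomputable def pplusOdd (j : Fin n) : R n k :=
  pplusAt n k fun i => (n - 2) + if i = j then 1 else 0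

/-- `p⁺_n` (for `n` even): fiber over `(n-2,…,n-2)`. -/
noncomputable def pplusEven : R n k :=
  pplusAt n k fun _ => n - 2

/-- `p_n = ∏_{i<j∈[n-1]} (x_{ij} x_{nn} + x_{in} x_{jn})`. -/
noncomputable def pn (hn : 0 < n) : R n k :=
  ∏ p ∈ Finset.univ.filter (fun p : Fin (n - 1) × Fin (n - 1) => p.1 < p.2),
    (X s(ι n p.1, ι n p.2) * X s(lastIdx n hn, lastIdx n hn)
      + X s(ι n p.1, lastIdx n hn) * X s(ι n p.2, lastIdx n hn))


/-- the `V_n`-degree of `p⁺_{n,j}`: `(n-2,…,n-2) + e_j` if `n` is odd,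
`(n-2,…,n-2)` if `n` is even. -/
def bsel (j : Fin n) : Fin n → ℕ :=
  fun i => if n % 2 = 1 then (n - 2) + (if i = j then 1 else 0) else n - 2

/-- the polynomial `p⁺_{n,j}` (independent of `j` for `n` even). -/
noncomputable def pplus (j : Fin n) : R n k := pplusAt n k (bsel n j)

/-!
Refine the Veronese grading by recording also the parities of the off-diagonal exponents. Then
`J_n` is the kernel of the homomorphism from `k[x]` to the monoid algebra of this finer grading.
The parity vectors possible for a given Veronese degree form a coset of the cycle space of the
complete graph, and the triangles through a fixed vertex `l` are a basis of the cycle space. The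
images of the binomials `x_{ij} x_{ll} + x_{il} x_{jl}` are, up to monomials, `1 +` the triangle
`ijl`, so the image of `p_n` is the sum of a whole fiber, and so are all its monomial multiples.
Hence the image of every element of the saturation has constant coefficients on each fiber. If
such a coefficient is nonzero, every parity vector of its fiber comes from a monomial; applied to
a parity vector equal to `1` off a vertex, this makes all entries of the Veronese degree at least
`n - 2`, which is where the fiber sums are monomial multiples of the images of the `p⁺_{n,j}`.
-/

section

variable {n k}

theorem mem_of_mapDomain_eq_zero {σ M A : Type*} [CommRing A] {I : Ideal (MvPolynomial σ A)}
    {d : (σ →₀ ℕ) → M} (hI : ∀ u v, d u = d v → monomial u 1 - monomial v 1 ∈ I)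
    {f : MvPolynomial σ A} (hf : AddMonoidAlgebra.mapDomain d f = 0) : f ∈ I := by
  let r := Function.invFun d
  have sub_mem (g : MvPolynomial σ A) :
      g - AddMonoidAlgebra.mapDomain r (AddMonoidAlgebra.mapDomain d g) ∈ I := by
    induction g using MvPolynomial.induction_on' with
    | monomial u a =>
      have hu : d u = d (r (d u)) := (Function.invFun_eq ⟨u, rfl⟩).symm
      have := I.mul_mem_left (C a) (hI _ _ hu)
      rw [mul_sub, C_mul_monomial, C_mul_monomial, mul_one] at this
      rwa [← single_eq_monomial u, AddMonoidAlgebra.mapDomain_single,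
        AddMonoidAlgebra.mapDomain_single]
    | add p q hp hq =>
      rw [AddMonoidAlgebra.mapDomain_add, AddMonoidAlgebra.mapDomain_add, add_sub_add_comm]
      exact I.add_mem hp hq
  simpa only [hf, AddMonoidAlgebra.mapDomain_zero, sub_zero] using sub_mem f

theorem exists_eq_of_coeff_mapDomain_ne_zero {M N A : Type*} [Semiring A] {d : M → N}
    {f : AddMonoidAlgebra A M} {w : N} (hw : (AddMonoidAlgebra.mapDomain d f).coeff w ≠ 0) :
    ∃ u, d u = w := by
  classical
  obtain ⟨u, -, hu⟩ := Finset.mem_image.mp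
    (Finsupp.mapDomain_support (Finsupp.mem_support_iff.mpr hw))
  exact ⟨u, hu⟩

/-! ### Veronese degrees -/

lemma wtN_eq (s : Sym2 (Fin n)) (i : Fin n) :
    wtN n s i = (∑ j, if s = s(i, j) then 1 else 0) + if s = s(i, i) then 1 else 0 := by
  by_cases hi : i ∈ s
  · obtain ⟨j, rfl⟩ := Sym2.mem_iff_exists.mp hi
    simp only [Sym2.congr_right, Finset.sum_ite_eq, Finset.mem_univ, if_true]
    simp [wtN, eq_comm]
  · have hs (j : Fin n) : s ≠ s(i, j) := by
      rintro rfl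
      exact hi (Sym2.mem_mk_left i j)
    simp only [hs, if_false, Finset.sum_const_zero, add_zero]
    induction s using Sym2.ind with
    | _ a b =>
      rw [Sym2.mem_iff, not_or] at hi
      simp [wtN, hi.1, hi.2]

lemma VN_apply (u : Sym2 (Fin n) →₀ ℕ) (i : Fin n) :
    VN n u i = ∑ j, u s(i, j) + u s(i, i) := by
  simp only [VN, wtN_eq, mul_add, Finset.mul_sum, Finset.sum_add_distrib]
  rw [Finset.sum_comm]
  simp

lemma VN_add (u v : Sym2 (Fin n) →₀ ℕ) : VN n (u + v) = VN n u + VN n v := by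
  funext i
  simp only [VN, Finsupp.add_apply, add_mul, Finset.sum_add_distrib, Pi.add_apply]

lemma VN_single (s : Sym2 (Fin n)) : VN n (Finsupp.single s 1) = wtN n s := by
  funext i
  simp [VN, Finsupp.single_apply]

lemma VN_single_mk (i j : Fin n) :
    VN n (Finsupp.single s(i, j) 1) = Pi.single i 1 + Pi.single j 1 := by
  funext l
  simp only [VN_single, wtN, Sym2.lift_mk, Pi.add_apply, Pi.single_apply]

lemma even_sum_VN (u : Sym2 (Fin n) →₀ ℕ) : Even (∑ i, VN n u i) := by
  have sum_wtN (s : Sym2 (Fin n)) : ∑ i, wtN n s i = 2 := by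
    induction s using Sym2.ind with
    | _ i j => simp [wtN, Finset.sum_add_distrib]
  simp only [VN]
  rw [Finset.sum_comm]
  simp only [← Finset.mul_sum, sum_wtN, ← Finset.sum_mul]
  exact even_two.mul_left _

-- Pairing up the elements of `s` leaves at most one of them over.
lemma exists_VN_eq_count_or (s : Multiset (Fin n)) :
    (∃ u, VN n u = s.count) ∨ ∃ u j, VN n u + Pi.single j 1 = s.count := by
  induction s using Multiset.induction with
  | empty => exact .inl ⟨0, by funext i; simp [VN]⟩
  | cons a s ih =>
    have count_cons : (a ::ₘ s).count = s.count + Pi.single a 1 := by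
      funext i
      simp only [Multiset.count_cons, Pi.add_apply, Pi.single_apply]
    rw [count_cons]
    obtain ⟨u, hu⟩ | ⟨u, j, hu⟩ := ih
    · exact .inr ⟨u, a, by rw [hu]⟩
    · exact .inl ⟨u + Finsupp.single s(j, a) 1, by rw [VN_add, VN_single_mk, ← hu, add_assoc]⟩

lemma exists_VN_eq {b : Fin n → ℕ} (hb : Even (∑ i, b i)) : ∃ u, VN n u = b := by
  let s := Finsupp.toMultiset (Finsupp.equivFunOnFinite.symm b)
  have hs : s.count = b := by
    funext i
    simp [s]
  obtain h | ⟨u, j, hu⟩ := exists_VN_eq_count_or s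
  · rwa [hs] at h
  · have odd_sum : Odd (∑ i, b i) := by
      rw [← hs, ← hu]
      simpa [Finset.sum_add_distrib] using (even_sum_VN u).add_one
    exact absurd hb (Nat.not_even_iff_odd.mpr odd_sum)

lemma exists_VN_add_eq {b c : Fin n → ℕ} (hbc : b ≤ c) (hb : Even (∑ i, b i))
    (hc : Even (∑ i, c i)) : ∃ u, VN n u + b = c := by
  have sum_sub : ∑ i, (c - b) i + ∑ i, b i = ∑ i, c i := by
    rw [← Finset.sum_add_distrib]
    exact Finset.sum_congr rfl fun i _ => Nat.sub_add_cancel (hbc i)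
  obtain ⟨u, hu⟩ := exists_VN_eq (b := c - b) <| by
    rwa [← sum_sub, Nat.even_add, iff_true_right hb] at hc
  exact ⟨u, by rw [hu, tsub_add_cancel_of_le hbc]⟩

/-! ### Off-diagonal parities -/

/-- The off-diagonal entries of an exponent vector modulo 2. The diagonal entries of the parity
vector are set to zero, so that they carry no information. -/
def parity : (Sym2 (Fin n) →₀ ℕ) →+ (Sym2 (Fin n) → ZMod 2) where
  toFun u s := if s.IsDiag then 0 else u s
  map_zero' := by
    funext s
    simp
  map_add' u v := by
    funext s
    by_cases hs : s.IsDiag <;> simp [hs]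

lemma parity_apply (u : Sym2 (Fin n) →₀ ℕ) (s : Sym2 (Fin n)) :
    parity u s = if s.IsDiag then 0 else (u s : ZMod 2) := rfl

lemma parity_apply_of_not_isDiag (u : Sym2 (Fin n) →₀ ℕ) {s : Sym2 (Fin n)} (hs : ¬s.IsDiag) :
    parity u s = u s := if_neg hs

lemma parity_single_diag (i : Fin n) (m : ℕ) : parity (Finsupp.single s(i, i) m) = 0 := by
  funext t
  rw [parity_apply, Pi.zero_apply, ite_eq_left_iff]
  intro ht
  rw [Finsupp.single_eq_of_ne (by rintro rfl; exact ht (Sym2.mk_isDiag_iff.mpr rfl)),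
    Nat.cast_zero]

/-- The off-diagonal parity vectors that a monomial of Veronese degree `b` can have: symmetric
zero-diagonal matrices over `ZMod 2` with row sums `b`. -/
def parities (b : Fin n → ℕ) : Finset (Sym2 (Fin n) → ZMod 2) :=
  Finset.univ.filter fun ε => (∀ i, ε s(i, i) = 0) ∧ ∀ i, ∑ j, ε s(i, j) = b i

lemma mem_parities {b : Fin n → ℕ} {ε : Sym2 (Fin n) → ZMod 2} :
    ε ∈ parities b ↔ (∀ i, ε s(i, i) = 0) ∧ ∀ i, ∑ j, ε s(i, j) = b i := by
  simp only [parities, Finset.mem_filter, Finset.mem_univ, true_and]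

lemma apply_eq_zero_of_mem_parities {b : Fin n → ℕ} {ε : Sym2 (Fin n) → ZMod 2}
    (hε : ε ∈ parities b) {s : Sym2 (Fin n)} (hs : s.IsDiag) : ε s = 0 := by
  induction s using Sym2.ind with
  | _ i j =>
    obtain rfl := Sym2.mk_isDiag_iff.mp hs
    exact (mem_parities.mp hε).1 i

lemma parity_mem_parities (u : Sym2 (Fin n) →₀ ℕ) : parity u ∈ parities (VN n u) := by
  refine mem_parities.mpr ⟨fun i => by simp [parity_apply], fun i => ?_⟩
  have parity_eq (j : Fin n) :
      parity u s(i, j) = u s(i, j) + if i = j then (u s(i, i) : ZMod 2) else 0 := by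
    by_cases hij : i = j
    · subst hij
      simp [parity_apply, CharTwo.add_self_eq_zero]
    · simp [parity_apply, hij]
  simp [parity_eq, VN_apply, Finset.sum_add_distrib]

lemma add_mem_parities_iff {b c : Fin n → ℕ} {δ ε : Sym2 (Fin n) → ZMod 2}
    (hδ : δ ∈ parities b) : δ + ε ∈ parities (b + c) ↔ ε ∈ parities c := by
  rw [mem_parities] at hδ
  simp [mem_parities, Finset.sum_add_distrib, hδ.1, hδ.2]

lemma sum_mem_parities {ι : Type*} {T : Finset ι} {f : ι → Sym2 (Fin n) → ZMod 2}
    (hf : ∀ t ∈ T, f t ∈ parities 0) : ∑ t ∈ T, f t ∈ parities 0 :=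
  Finset.sum_induction _ (· ∈ parities 0)
    (fun _ _ hδ hε => add_zero (0 : Fin n → ℕ) ▸ (add_mem_parities_iff hδ).mpr hε)
    (by simp [mem_parities]) hf

/-- The edges of the complete graph on `[n]` that do not meet the vertex `l`. -/
def edgesAvoiding (l : Fin n) : Finset (Sym2 (Fin n)) :=
  Finset.univ.filter fun s => ¬s.IsDiag ∧ l ∉ s

lemma mem_edgesAvoiding {l : Fin n} {s : Sym2 (Fin n)} :
    s ∈ edgesAvoiding l ↔ ¬s.IsDiag ∧ l ∉ s := by
  simp only [edgesAvoiding, Finset.mem_filter, Finset.mem_univ, true_and]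

lemma eq_of_eqOn_edgesAvoiding {b : Fin n → ℕ} {δ ε : Sym2 (Fin n) → ZMod 2}
    (hδ : δ ∈ parities b) (hε : ε ∈ parities b) (l : Fin n)
    (h : ∀ s ∈ edgesAvoiding l, δ s = ε s) : δ = ε := by
  have eq_of_notMem (s : Sym2 (Fin n)) (hs : l ∉ s) : δ s = ε s := by
    by_cases hd : s.IsDiag
    · rw [apply_eq_zero_of_mem_parities hδ hd, apply_eq_zero_of_mem_parities hε hd]
    · exact h s (mem_edgesAvoiding.mpr ⟨hd, hs⟩)
  have eq_at_l (i : Fin n) (hi : i ≠ l) : δ s(i, l) = ε s(i, l) := by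
    have row_sum : ∑ j, δ s(i, j) = ∑ j, ε s(i, j) :=
      ((mem_parities.mp hδ).2 i).trans ((mem_parities.mp hε).2 i).symm
    rw [← Finset.add_sum_erase _ _ (Finset.mem_univ l),
      ← Finset.add_sum_erase _ (fun j => ε s(i, j)) (Finset.mem_univ l)] at row_sum
    have rest : ∑ j ∈ Finset.univ.erase l, δ s(i, j) = ∑ j ∈ Finset.univ.erase l, ε s(i, j) :=
      Finset.sum_congr rfl fun j hj => eq_of_notMem _ <| by
        rw [Sym2.mem_iff, not_or]
        exact ⟨hi.symm, (Finset.ne_of_mem_erase hj).symm⟩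
    rwa [rest, add_left_inj] at row_sum
  funext s
  by_cases hs : l ∈ s
  · obtain ⟨i, rfl⟩ := Sym2.mem_iff_exists.mp hs
    by_cases hi : i = l
    · subst hi
      rw [(mem_parities.mp hδ).1, (mem_parities.mp hε).1]
    · rw [Sym2.eq_swap]
      exact eq_at_l i hi
  · exact eq_of_notMem s hs

/-- The parity vector of the triangle with base the edge `s` and apex `l`. For fixed `l` and `s`
ranging over `edgesAvoiding l`, these form a basis of the cycle space `parities 0`. -/
noncomputable def triangle (l : Fin n) : Sym2 (Fin n) → Sym2 (Fin n) → ZMod 2 :=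
  Sym2.lift ⟨fun i j => parity (Finsupp.single s(i, j) 1 + Finsupp.single s(i, l) 1 +
      Finsupp.single s(j, l) 1),
    fun i j => by
      dsimp only
      rw [Sym2.eq_swap (a := i) (b := j), add_right_comm]⟩

lemma triangle_mk (l i j : Fin n) :
    triangle l s(i, j) = parity (Finsupp.single s(i, j) 1 + Finsupp.single s(i, l) 1 +
      Finsupp.single s(j, l) 1) := rfl

lemma triangle_mem_parities (l : Fin n) (s : Sym2 (Fin n)) : triangle l s ∈ parities 0 := by
  induction s using Sym2.ind with
  | _ i j =>
    obtain ⟨diag, row_sum⟩ := mem_parities.mp <| parity_mem_parities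
      (Finsupp.single s(i, j) 1 + Finsupp.single s(i, l) 1 + Finsupp.single s(j, l) 1)
    refine mem_parities.mpr ⟨diag, fun a => (row_sum a).trans ?_⟩
    simp only [VN_add, VN_single_mk]
    simp only [Pi.add_apply, Pi.zero_apply, Nat.cast_add, Nat.cast_zero]
    linear_combination (((Pi.single i 1 : Fin n → ℕ) a : ZMod 2) + (Pi.single j 1 : Fin n → ℕ) a +
      (Pi.single l 1 : Fin n → ℕ) a) * (CharTwo.two_eq_zero (R := ZMod 2))

lemma triangle_apply {l : Fin n} {s t : Sym2 (Fin n)} (ht : t ∈ edgesAvoiding l) :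
    triangle l s t = if s = t then 1 else 0 := by
  obtain ⟨hd, hl⟩ := mem_edgesAvoiding.mp ht
  have ne (i : Fin n) : s(i, l) ≠ t := by
    rintro rfl
    exact hl (Sym2.mem_mk_right i l)
  induction s using Sym2.ind with
  | _ i j =>
    rw [triangle_mk, parity_apply_of_not_isDiag _ hd]
    simp [Finsupp.single_apply, ne]

lemma sum_triangle_apply {l : Fin n} {t : Sym2 (Fin n)} (ht : t ∈ edgesAvoiding l)
    (T : Finset (Sym2 (Fin n))) : (∑ s ∈ T, triangle l s) t = if t ∈ T then 1 else 0 := by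
  rw [Finset.sum_apply]
  simp only [triangle_apply ht, Finset.sum_ite_eq']

lemma exists_mem_parities_eq_one {b : Fin n → ℕ} (hb : (parities b).Nonempty) (l : Fin n) :
    ∃ δ ∈ parities b, ∀ s ∈ edgesAvoiding l, δ s = 1 := by
  obtain ⟨ε, hε⟩ := hb
  let T := Finset.univ.filter fun s => ε s ≠ 1
  refine ⟨∑ s ∈ T, triangle l s + ε, ?_, fun s hs => ?_⟩
  · rw [← zero_add b]
    exact (add_mem_parities_iff (sum_mem_parities fun s _ => triangle_mem_parities l s)).mpr hε
  · have flip : ∀ x : ZMod 2, (if x ≠ 1 then 1 else 0) + x = 1 := by decide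
    rw [Pi.add_apply, sum_triangle_apply hs]
    simpa only [T, Finset.mem_filter, Finset.mem_univ, true_and] using flip (ε s)

/-! ### The fine grading -/

/-- The degrees of the grading of `k[x]` that refines the Veronese degree by the off-diagonal
parities. -/
abbrev FineDegree (n : ℕ) := (Fin n → ℕ) × (Sym2 (Fin n) → ZMod 2)

/-- The fine degree of an exponent vector: its Veronese degree and its off-diagonal parities. -/
noncomputable def fineDegree (n : ℕ) : (Sym2 (Fin n) →₀ ℕ) →+ FineDegree n where
  toFun u := (VN n u, parity u)
  map_zero' := by
    rw [map_zero]
    congr 1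
    funext i
    simp [VN]
  map_add' u v := by rw [VN_add, map_add, Prod.mk_add_mk]

lemma fineDegree_apply (u : Sym2 (Fin n) →₀ ℕ) : fineDegree n u = (VN n u, parity u) := rfl

/-- The off-diagonal entries of the exponent vector `u` are at most `1`. These are the canonical
representatives of the fine degrees, and the exponents that occur in `pplusAt`. -/
def OffDiagSquarefree (u : Sym2 (Fin n) →₀ ℕ) : Prop := ∀ s : Sym2 (Fin n), ¬s.IsDiag → u s ≤ 1

lemma OffDiagSquarefree.eq_of_fineDegree_eq {u v : Sym2 (Fin n) →₀ ℕ} (hu : OffDiagSquarefree u)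
    (hv : OffDiagSquarefree v) (huv : fineDegree n u = fineDegree n v) : u = v := by
  rw [fineDegree_apply, fineDegree_apply, Prod.mk.injEq] at huv
  obtain ⟨hVN, hparity⟩ := huv
  have off_diag (s : Sym2 (Fin n)) (hs : ¬s.IsDiag) : u s = v s := by
    have hmod := congrFun hparity s
    rw [parity_apply_of_not_isDiag u hs, parity_apply_of_not_isDiag v hs,
      ZMod.natCast_eq_natCast_iff'] at hmod
    have := hu s hs
    have := hv s hs
    lia
  ext s
  induction s using Sym2.ind with
  | _ i j =>
    by_cases hij : i = j
    · subst hij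
      have hsum : ∑ j ∈ Finset.univ.erase i, u s(i, j) = ∑ j ∈ Finset.univ.erase i, v s(i, j) :=
        Finset.sum_congr rfl fun j hj => off_diag _ <| by
          rw [Sym2.mk_isDiag_iff]
          exact (Finset.ne_of_mem_erase hj).symm
      have hi := congrFun hVN i
      rw [VN_apply, VN_apply, ← Finset.add_sum_erase _ _ (Finset.mem_univ i),
        ← Finset.add_sum_erase _ (fun j => v s(i, j)) (Finset.mem_univ i)] at hi
      lia
    · exact off_diag _ (by rwa [Sym2.mk_isDiag_iff])

lemma sum_val_mod_two {b : Fin n → ℕ} {ε : Sym2 (Fin n) → ZMod 2} (hε : ε ∈ parities b)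
    (i : Fin n) : (∑ j, (ε s(i, j)).val) % 2 = b i % 2 := by
  rw [← ZMod.natCast_eq_natCast_iff', ← (mem_parities.mp hε).2 i]
  simp

lemma sum_val_le {b : Fin n → ℕ} {ε : Sym2 (Fin n) → ZMod 2} (hε : ε ∈ parities b) {i : Fin n}
    (hb : n - 2 ≤ b i) : ∑ j, (ε s(i, j)).val ≤ b i := by
  have sum_le : ∑ j, (ε s(i, j)).val ≤ n - 1 := by
    rw [← Finset.add_sum_erase _ _ (Finset.mem_univ i), (mem_parities.mp hε).1, ZMod.val_zero,
      zero_add]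
    refine (Finset.sum_le_card_nsmul _ _ 1 fun j _ => ?_).trans_eq (by simp)
    exact Nat.le_of_lt_succ (ZMod.val_lt _)
  -- The sum could exceed `b i` only by being `n - 1 = b i + 1`, which has the wrong parity.
  have := sum_val_mod_two hε i
  have := i.isLt
  lia

lemma exists_offDiagSquarefree_fineDegree_eq {b : Fin n → ℕ} {ε : Sym2 (Fin n) → ZMod 2}
    (hε : ε ∈ parities b) (hle : ∀ i, ∑ j, (ε s(i, j)).val ≤ b i) :
    ∃ u, OffDiagSquarefree u ∧ fineDegree n u = (b, ε) := by
  let m (i : Fin n) : ℕ := (b i - ∑ j, (ε s(i, j)).val) / 2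
  let u : Sym2 (Fin n) →₀ ℕ := Finsupp.equivFunOnFinite.symm (fun s => (ε s).val) +
    ∑ i, Finsupp.single s(i, i) (m i)
  have u_apply (i j : Fin n) : u s(i, j) = (ε s(i, j)).val + if i = j then m i else 0 := by
    by_cases hij : i = j
    · subst hij
      simp [u, Finsupp.single_apply]
    · have (a : Fin n) : s(a, a) ≠ s(i, j) := by grind
      simp [u, hij, this]
  refine ⟨u, fun s hs => ?_, Prod.ext (funext fun i => ?_) (funext fun s => ?_)⟩
  · induction s using Sym2.ind with
    | _ i j =>
      rw [u_apply, if_neg (by rwa [Sym2.mk_isDiag_iff] at hs), add_zero]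
      exact Nat.le_of_lt_succ (ZMod.val_lt _)
  · have := hle i
    have := sum_val_mod_two hε i
    simp only [fineDegree_apply, VN_apply, u_apply, Finset.sum_add_distrib, Finset.sum_ite_eq,
      Finset.mem_univ, if_true, (mem_parities.mp hε).1, ZMod.val_zero]
    lia
  · induction s using Sym2.ind with
    | _ i j =>
      simp only [fineDegree_apply, parity_apply, u_apply]
      by_cases hij : i = j
      · subst hij
        simp [(mem_parities.mp hε).1]
      · simp [hij]

lemma sub_two_le_of_forall_parities {b : Fin n → ℕ} (hb : (parities b).Nonempty)
    (h : ∀ ε ∈ parities b, ∃ u, fineDegree n u = (b, ε)) (i : Fin n) : n - 2 ≤ b i := by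
  obtain hn | hn := lt_or_ge n 2
  · lia
  have : Nontrivial (Fin n) := Fin.nontrivial_iff_two_le.mpr hn
  obtain ⟨l, hl⟩ := exists_ne i
  obtain ⟨δ, hδ, hδ_one⟩ := exists_mem_parities_eq_one hb l
  obtain ⟨u, hu⟩ := h δ hδ
  rw [fineDegree_apply, Prod.mk.injEq] at hu
  obtain ⟨rfl, rfl⟩ := hu
  have one_le (j : Fin n) (hj : j ∈ (Finset.univ.erase i).erase l) : 1 ≤ u s(i, j) := by
    rw [Finset.mem_erase, Finset.mem_erase] at hj
    have hs : s(i, j) ∈ edgesAvoiding l := by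
      grind [mem_edgesAvoiding, Sym2.mk_isDiag_iff]
    have := hδ_one _ hs
    rw [parity_apply_of_not_isDiag u (mem_edgesAvoiding.mp hs).1] at this
    by_contra! hlt
    rw [Nat.lt_one_iff.mp hlt] at this
    simp at this
  have hcard : ((Finset.univ.erase i).erase l).card = n - 2 := by
    rw [Finset.card_erase_of_mem (by simpa using hl), Finset.card_erase_of_mem (Finset.mem_univ _),
      Finset.card_fin, Nat.sub_sub]
  calc
    n - 2 = ((Finset.univ.erase i).erase l).card • 1 := by rw [hcard, smul_eq_mul, mul_one]
    _ ≤ ∑ j ∈ (Finset.univ.erase i).erase l, u s(i, j) := Finset.card_nsmul_le_sum _ _ _ one_le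
    _ ≤ ∑ j, u s(i, j) := Finset.sum_le_sum_of_subset (Finset.subset_univ _)
    _ ≤ VN n u i := by
      rw [VN_apply]
      exact Nat.le_add_right _ _

/-! ### `J_n` as the kernel of the fine grading -/

lemma fineDegree_two_nsmul_single (i j : Fin n) :
    fineDegree n (2 • Finsupp.single s(i, j) 1) =
      fineDegree n (Finsupp.single s(i, i) 1 + Finsupp.single s(j, j) 1) := by
  rw [two_nsmul, fineDegree_apply, fineDegree_apply]
  refine Prod.ext ?_ ?_
  · simp only [VN_add, VN_single_mk]
    abel
  · simp only [map_add, parity_single_diag, add_zero]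
    funext s
    exact CharTwo.add_self_eq_zero _

variable (n k) in
/-- The algebra homomorphism from `k[x]` to the monoid algebra of fine degrees which sends each
monomial to its fine degree. -/
noncomputable def fineHom : R n k →ₐ[k] AddMonoidAlgebra k (FineDegree n) :=
  AddMonoidAlgebra.mapDomainAlgHom k k (fineDegree n)

lemma fineHom_monomial (u : Sym2 (Fin n) →₀ ℕ) (a : k) :
    fineHom n k (monomial u a) = AddMonoidAlgebra.single (fineDegree n u) a :=
  AddMonoidAlgebra.mapDomain_single

lemma fineHom_X_mul_X (s t : Sym2 (Fin n)) :
    fineHom n k (X s * X t) =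
      AddMonoidAlgebra.single (fineDegree n (Finsupp.single s 1 + Finsupp.single t 1)) 1 := by
  rw [X, X, monomial_mul, one_mul, fineHom_monomial]

lemma Jideal_le_ker_fineHom : Jideal n k ≤ RingHom.ker (fineHom n k) := by
  rw [Jideal, Ideal.span_le]
  rintro f ⟨i, j, -, rfl⟩
  rw [SetLike.mem_coe, RingHom.mem_ker, map_sub, sq, fineHom_X_mul_X, fineHom_X_mul_X,
    ← two_nsmul, fineDegree_two_nsmul_single, sub_self]

lemma minor_mem_Jideal (i j : Fin n) :
    (X s(i, i) * X s(j, j) - X s(i, j) ^ 2 : R n k) ∈ Jideal n k := by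
  obtain h | rfl | h := lt_trichotomy i j
  · exact Ideal.subset_span ⟨i, j, h, rfl⟩
  · rw [sq, sub_self]
    exact zero_mem _
  · exact Ideal.subset_span ⟨j, i, h, by rw [Sym2.eq_swap (a := i) (b := j), mul_comm (X s(i, i))]⟩

lemma monomial_sub_monomial_mem_Jideal (i j : Fin n) (w : Sym2 (Fin n) →₀ ℕ) :
    (monomial (w + 2 • Finsupp.single s(i, j) 1) 1 -
      monomial (w + (Finsupp.single s(i, i) 1 + Finsupp.single s(j, j) 1)) 1 : R n k) ∈
        Jideal n k := by
  have := (Jideal n k).mul_mem_left (-monomial w 1) (minor_mem_Jideal i j)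
  rwa [X, X, X, monomial_pow, monomial_mul, neg_mul, mul_sub, neg_sub, monomial_mul, monomial_mul,
    one_pow, one_mul, one_mul] at this

variable (k) in
lemma exists_offDiagSquarefree_sub_mem_Jideal (u : Sym2 (Fin n) →₀ ℕ) :
    ∃ v, OffDiagSquarefree v ∧ (monomial u 1 - monomial v 1 : R n k) ∈ Jideal n k := by
  let offDiagDegree : (Sym2 (Fin n) →₀ ℕ) →+ ℕ :=
    Finsupp.weight fun s => if s.IsDiag then 0 else 1
  induction hN : offDiagDegree u using Nat.strong_induction_on generalizing u with
  | _ N ih =>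
    by_cases hu : OffDiagSquarefree u
    · exact ⟨u, hu, by rw [sub_self]; exact zero_mem _⟩
    · rw [OffDiagSquarefree] at hu
      push Not at hu
      obtain ⟨s, hs, hlt⟩ := hu
      induction s using Sym2.ind with
      | _ i j =>
        have hij : i ≠ j := by rwa [Sym2.mk_isDiag_iff] at hs
        obtain ⟨w, rfl⟩ : ∃ w, u = w + 2 • Finsupp.single s(i, j) 1 :=
          le_iff_exists_add'.mp (by simpa using Nat.succ_le_of_lt hlt)
        let u' := w + (Finsupp.single s(i, i) 1 + Finsupp.single s(j, j) 1)
        have offDiagDegree_lt : offDiagDegree u' < N := by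
          simp [← hN, u', offDiagDegree, Finsupp.weight_single, hij]
        obtain ⟨v, hv, hmem⟩ := ih _ offDiagDegree_lt u' rfl
        exact ⟨v, hv, by
          simpa only [u', sub_add_sub_cancel] using
            add_mem (monomial_sub_monomial_mem_Jideal i j w) hmem⟩

lemma monomial_sub_monomial_mem_Jideal_of_fineDegree_eq {u v : Sym2 (Fin n) →₀ ℕ}
    (huv : fineDegree n u = fineDegree n v) :
    (monomial u 1 - monomial v 1 : R n k) ∈ Jideal n k := by
  have fineDegree_eq {u v : Sym2 (Fin n) →₀ ℕ}
      (h : (monomial u 1 - monomial v 1 : R n k) ∈ Jideal n k) :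
      fineDegree n u = fineDegree n v := by
    have := RingHom.mem_ker.mp (Jideal_le_ker_fineHom h)
    rw [map_sub, sub_eq_zero, fineHom_monomial, fineHom_monomial] at this
    exact AddMonoidAlgebra.single_left_injective one_ne_zero this
  obtain ⟨u', hu', hmem_u⟩ := exists_offDiagSquarefree_sub_mem_Jideal k u
  obtain ⟨v', hv', hmem_v⟩ := exists_offDiagSquarefree_sub_mem_Jideal k v
  obtain rfl : u' = v' := hu'.eq_of_fineDegree_eq hv' <|
    ((fineDegree_eq hmem_u).symm.trans huv).trans (fineDegree_eq hmem_v)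
  simpa using sub_mem hmem_u hmem_v

theorem ker_fineHom : RingHom.ker (fineHom n k) = Jideal n k :=
  le_antisymm (fun _ hf => mem_of_mapDomain_eq_zero
    (fun _ _ => monomial_sub_monomial_mem_Jideal_of_fineDegree_eq) hf) Jideal_le_ker_fineHom

lemma sub_mem_Jideal_iff {f g : R n k} : f - g ∈ Jideal n k ↔ fineHom n k f = fineHom n k g := by
  rw [← ker_fineHom, RingHom.mem_ker, map_sub, sub_eq_zero]

variable (k) in
/-- The sum of all fine degrees over the Veronese degree `b`. -/
noncomputable def fiberSum (b : Fin n → ℕ) : AddMonoidAlgebra k (FineDegree n) :=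
  ∑ ε ∈ parities b, AddMonoidAlgebra.single (b, ε) 1

lemma coeff_fiberSum (b b' : Fin n → ℕ) (ε : Sym2 (Fin n) → ZMod 2) :
    (fiberSum k b).coeff (b', ε) = if b = b' ∧ ε ∈ parities b then 1 else 0 := by
  rw [fiberSum, AddMonoidAlgebra.coeff_sum, Finsupp.finsetSum_apply]
  by_cases hb : b = b' <;> simp [AddMonoidAlgebra.coeff_single, Finsupp.single_apply, hb]

lemma fineHom_monomial_mul_fiberSum (u : Sym2 (Fin n) →₀ ℕ) (b : Fin n → ℕ) :
    fineHom n k (monomial u 1) * fiberSum k b = fiberSum k (VN n u + b) := by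
  rw [fineHom_monomial, fineDegree_apply, fiberSum, fiberSum, Finset.mul_sum]
  refine Finset.sum_equiv (Equiv.addLeft (parity u)) (fun ε => ?_) fun ε _ => ?_
  · exact (add_mem_parities_iff (parity_mem_parities u)).symm
  · rw [AddMonoidAlgebra.single_mul_single, one_mul, Prod.mk_add_mk, Equiv.coe_addLeft]

lemma fineHom_pplusAt {b : Fin n → ℕ} (hb : ∀ i, n - 2 ≤ b i) :
    fineHom n k (pplusAt n k b) = fiberSum k b := by
  have mem_index {u : Sym2 (Fin n) →₀ ℕ} :
      u ∈ (fiberFinset n b).filter (fun u => ∀ s : Sym2 (Fin n), ¬s.IsDiag → u s ≤ 1) ↔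
        VN n u = b ∧ OffDiagSquarefree u := by
    rw [Finset.mem_filter, fiberFinset, Set.Finite.mem_toFinset]
    rfl
  rw [pplusAt, map_sum, fiberSum]
  refine Finset.sum_bij (fun u _ => parity u) ?_ ?_ ?_ ?_
  · intro u hu
    exact (mem_index.mp hu).1 ▸ parity_mem_parities u
  · intro u hu v hv huv
    obtain ⟨hu, hu'⟩ := mem_index.mp hu
    obtain ⟨hv, hv'⟩ := mem_index.mp hv
    exact hu'.eq_of_fineDegree_eq hv' (Prod.ext (hu.trans hv.symm) huv)
  · intro ε hε
    obtain ⟨u, hu, hdeg⟩ := exists_offDiagSquarefree_fineDegree_eq hε fun i => sum_val_le hε (hb i)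
    rw [fineDegree_apply, Prod.mk.injEq] at hdeg
    exact ⟨u, mem_index.mpr ⟨hdeg.1, hu⟩, hdeg.2⟩
  · intro u hu
    rw [fineHom_monomial, fineDegree_apply, (mem_index.mp hu).1]

/-! ### `p_n` and fiber sums -/

lemma prod_one_add_single_triangle (l : Fin n) :
    ∏ s ∈ edgesAvoiding l, (1 + AddMonoidAlgebra.single (0, triangle l s) 1) = fiberSum k 0 := by
  have prod_single (T : Finset (Sym2 (Fin n))) :
      (∏ s ∈ T, AddMonoidAlgebra.single (0, triangle l s) 1 : AddMonoidAlgebra k (FineDegree n)) =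
        AddMonoidAlgebra.single (0, ∑ s ∈ T, triangle l s) 1 := by
    rw [AddMonoidAlgebra.prod_single, Finset.prod_const_one]
    congr 1
    exact Prod.ext (by simp [Prod.fst_sum]) (by simp [Prod.snd_sum])
  rw [Finset.prod_one_add, fiberSum]
  refine Finset.sum_nbij' (fun T => ∑ s ∈ T, triangle l s)
    (fun ε => (edgesAvoiding l).filter fun s => ε s = 1) ?_ ?_ ?_ ?_ ?_
  · intro T _
    exact sum_mem_parities fun s _ => triangle_mem_parities l s
  · intro ε _
    exact Finset.mem_powerset.mpr (Finset.filter_subset _ _)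
  · intro T hT
    ext s
    have := @Finset.mem_powerset.mp hT s
    rw [Finset.mem_filter]
    grind [sum_triangle_apply]
  · intro ε hε
    refine eq_of_eqOn_edgesAvoiding (sum_mem_parities fun s _ => triangle_mem_parities l s) hε l
      fun s hs => ?_
    have indicator_eq : ∀ x : ZMod 2, (if x = 1 then 1 else 0) = x := by decide
    rw [sum_triangle_apply hs]
    simpa [hs] using indicator_eq (ε s)
  · intro T _
    exact prod_single T

lemma fineHom_X_mul_X_add_X_mul_X (i j l : Fin n) :
    fineHom n k (X s(i, j) * X s(l, l) + X s(i, l) * X s(j, l)) =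
      fineHom n k (monomial (Finsupp.single s(i, l) 1 + Finsupp.single s(j, l) 1) 1) *
        (1 + AddMonoidAlgebra.single (0, triangle l s(i, j)) 1) := by
  rw [map_add, fineHom_X_mul_X, fineHom_X_mul_X, fineHom_monomial, mul_add, mul_one,
    AddMonoidAlgebra.single_mul_single, one_mul, add_comm]
  congr 2
  rw [fineDegree_apply, fineDegree_apply, Prod.mk_add_mk, add_zero, triangle_mk]
  refine Prod.ext ?_ ?_
  · simp only [VN_add, VN_single_mk]
    abel
  · simp only [map_add, parity_single_diag, add_zero]
    funext s
    simp only [Pi.add_apply]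
    ring_nf
    simp [CharTwo.two_eq_zero]

lemma ι_ne_lastIdx (hn : 0 < n) (i : Fin (n - 1)) : ι n i ≠ lastIdx n hn :=
  fun h => i.isLt.ne (congrArg Fin.val h)

lemma exists_ι_eq (hn : 0 < n) {i : Fin n} (hi : i ≠ lastIdx n hn) : ∃ a, ι n a = i := by
  have : (i : ℕ) ≠ n - 1 := fun h => hi (Fin.ext h)
  exact ⟨⟨i, by lia⟩, rfl⟩

lemma prod_edgesAvoiding_lastIdx {M : Type*} [CommMonoid M] (hn : 0 < n) (f : Sym2 (Fin n) → M) :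
    ∏ p ∈ Finset.univ.filter (fun p : Fin (n - 1) × Fin (n - 1) => p.1 < p.2),
      f s(ι n p.1, ι n p.2) = ∏ s ∈ edgesAvoiding (lastIdx n hn), f s := by
  have hι : Function.Injective (ι n) := Fin.castLE_injective _
  refine Finset.prod_nbij (fun p => s(ι n p.1, ι n p.2)) ?_ ?_ ?_ fun _ _ => rfl
  · intro p hp
    rw [mem_edgesAvoiding, Sym2.mk_isDiag_iff, Sym2.mem_iff, hι.eq_iff]
    have := (Finset.mem_filter.mp hp).2.ne
    grind [ι_ne_lastIdx]
  · intro p hp q hq hpq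
    have hp := (Finset.mem_filter.mp hp).2
    have hq := (Finset.mem_filter.mp hq).2
    have := Sym2.eq_iff.mp hpq
    simp only [hι.eq_iff] at this
    grind
  · intro s hs
    obtain ⟨hd, hl⟩ := mem_edgesAvoiding.mp hs
    induction s using Sym2.ind with
    | _ i j =>
      rw [Sym2.mem_iff, not_or] at hl
      obtain ⟨a, rfl⟩ := exists_ι_eq hn (Ne.symm hl.1)
      obtain ⟨b, rfl⟩ := exists_ι_eq hn (Ne.symm hl.2)
      rw [Sym2.mk_isDiag_iff, hι.eq_iff] at hd
      obtain h | h := lt_or_gt_of_ne hd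
      · exact ⟨(a, b), by simpa using h, rfl⟩
      · exact ⟨(b, a), by simpa using h, Sym2.eq_swap⟩

variable (k) in
theorem exists_fineHom_pn_eq_fiberSum (hn : 0 < n) :
    ∃ w, fineHom n k (pn n k hn) = fiberSum k (VN n w) := by
  let l := lastIdx n hn
  let P := Finset.univ.filter fun p : Fin (n - 1) × Fin (n - 1) => p.1 < p.2
  let d (p : Fin (n - 1) × Fin (n - 1)) : Sym2 (Fin n) →₀ ℕ :=
    Finsupp.single s(ι n p.1, l) 1 + Finsupp.single s(ι n p.2, l) 1
  refine ⟨∑ p ∈ P, d p, ?_⟩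
  calc
    fineHom n k (pn n k hn) = ∏ p ∈ P, fineHom n k (monomial (d p) 1) *
        (1 + AddMonoidAlgebra.single (0, triangle l s(ι n p.1, ι n p.2)) 1) := by
      rw [pn, map_prod]
      refine Finset.prod_congr rfl fun p _ => fineHom_X_mul_X_add_X_mul_X _ _ l
    _ = fineHom n k (monomial (∑ p ∈ P, d p) 1) * fiberSum k 0 := by
      rw [Finset.prod_mul_distrib, ← map_prod, ← monomial_sum_one,
        prod_edgesAvoiding_lastIdx hn fun s => 1 + AddMonoidAlgebra.single (0, triangle l s) 1,
        prod_one_add_single_triangle]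
    _ = fiberSum k (VN n (∑ p ∈ P, d p)) := by rw [fineHom_monomial_mul_fiberSum, add_zero]

/-- The coefficients of `F` depend only on the Veronese degree: they are constant on the set of
fine degrees over each Veronese degree, and vanish at the pairs that are not of this form. -/
def IsFiberConstant (F : AddMonoidAlgebra k (FineDegree n)) : Prop :=
  ∃ c : (Fin n → ℕ) → k, ∀ b ε, F.coeff (b, ε) = if ε ∈ parities b then c b else 0

lemma IsFiberConstant.add {F G : AddMonoidAlgebra k (FineDegree n)} (hF : IsFiberConstant F)
    (hG : IsFiberConstant G) : IsFiberConstant (F + G) := by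
  obtain ⟨c, hc⟩ := hF
  obtain ⟨d, hd⟩ := hG
  refine ⟨c + d, fun b ε => ?_⟩
  rw [AddMonoidAlgebra.coeff_add, Finsupp.add_apply, hc, hd, ite_add_ite, add_zero,
    Pi.add_apply]

lemma isFiberConstant_smul_fiberSum (a : k) (b : Fin n → ℕ) :
    IsFiberConstant (a • fiberSum k b) := by
  refine ⟨Pi.single b a, fun b' ε => ?_⟩
  rw [AddMonoidAlgebra.coeff_smul_apply, coeff_fiberSum]
  by_cases hb : b = b'
  · subst hb
    simp
  · simp [hb, Ne.symm hb]

lemma isFiberConstant_fineHom_mul_fiberSum (h : R n k) (b : Fin n → ℕ) :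
    IsFiberConstant (fineHom n k h * fiberSum k b) := by
  induction h using MvPolynomial.induction_on' with
  | monomial u a =>
    have : monomial u a = a • (monomial u 1 : R n k) := by
      rw [smul_monomial, smul_eq_mul, mul_one]
    rw [this, map_smul, smul_mul_assoc, fineHom_monomial_mul_fiberSum]
    exact isFiberConstant_smul_fiberSum a _
  | add p q hp hq =>
    rw [map_add, add_mul]
    exact hp.add hq

lemma IsFiberConstant.of_monomial_mul {u : Sym2 (Fin n) →₀ ℕ}
    {F : AddMonoidAlgebra k (FineDegree n)}
    (h : IsFiberConstant (fineHom n k (monomial u 1) * F)) : IsFiberConstant F := by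
  obtain ⟨c, hc⟩ := h
  refine ⟨fun b => c (VN n u + b), fun b ε => ?_⟩
  have coeff_shift : (fineHom n k (monomial u 1) * F).coeff (VN n u + b, parity u + ε) =
      F.coeff (b, ε) := by
    rw [fineHom_monomial, ← one_mul (F.coeff (b, ε)), ← AddMonoidAlgebra.coeff_single_mul_add]
    rfl
  simp only [← coeff_shift, hc, add_mem_parities_iff (parity_mem_parities u)]

lemma IsFiberConstant.eq_sum_smul_fiberSum {F : AddMonoidAlgebra k (FineDegree n)}
    (hF : IsFiberConstant F) : ∃ (B : Finset (Fin n → ℕ)) (c : (Fin n → ℕ) → k),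
      (∀ b ∈ B, (parities b).Nonempty ∧ ∀ ε ∈ parities b, F.coeff (b, ε) ≠ 0) ∧
        F = ∑ b ∈ B, c b • fiberSum k b := by
  obtain ⟨c, hc⟩ := hF
  let B := F.coeff.support.image Prod.fst
  have mem_B {b : Fin n → ℕ} : b ∈ B ↔ ∃ ε, F.coeff (b, ε) ≠ 0 := by
    simp [B]
  refine ⟨B, c, fun b hb => ?_, ?_⟩
  · obtain ⟨ε, hε⟩ := mem_B.mp hb
    rw [hc, ne_eq, ite_eq_right_iff, not_forall] at hε
    obtain ⟨hε, hcb⟩ := hε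
    exact ⟨⟨ε, hε⟩, fun δ hδ => by rwa [hc, if_pos hδ]⟩
  · ext ⟨b, ε⟩
    have apply_eq_zero (hb : b ∉ B) : F.coeff (b, ε) = 0 := by
      by_contra h
      exact hb (mem_B.mpr ⟨ε, h⟩)
    rw [AddMonoidAlgebra.coeff_sum, Finsupp.finsetSum_apply]
    simp only [AddMonoidAlgebra.coeff_smul_apply, coeff_fiberSum, ite_and, smul_eq_mul, mul_ite,
      mul_one, mul_zero, Finset.sum_ite_eq']
    by_cases hb : b ∈ B
    · rw [if_pos hb, hc]
    · rw [if_neg hb, apply_eq_zero hb]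

/-! ### The saturation -/

lemma sub_two_le_bsel (j i : Fin n) : n - 2 ≤ bsel n j i := by
  unfold bsel
  split_ifs <;> lia

lemma even_sum_bsel (hn : 1 < n) (j : Fin n) : Even (∑ i, bsel n j i) := by
  obtain h | h := Nat.even_or_odd n
  · simp [bsel, Nat.even_iff.mp h, h]
  · have : Odd (n - 2) := Nat.Odd.sub_even hn h even_two
    simpa [bsel, Nat.odd_iff.mp h, Finset.sum_add_distrib] using (h.mul this).add_one

lemma exists_bsel_le (hn : 1 < n) {b : Fin n → ℕ} (hb : ∀ i, n - 2 ≤ b i)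
    (heven : Even (∑ i, b i)) : ∃ j, bsel n j ≤ b := by
  obtain h | h := Nat.even_or_odd n
  · exact ⟨⟨0, by lia⟩, fun i => by simpa [bsel, Nat.even_iff.mp h] using hb i⟩
  · obtain ⟨j, hj⟩ : ∃ j, n - 2 < b j := by
      by_contra! hle
      have hb_eq (i : Fin n) : b i = n - 2 := (hle i).antisymm (hb i)
      have : Odd (n * (n - 2)) := h.mul (Nat.Odd.sub_even hn h even_two)
      simp only [hb_eq, Finset.sum_const, Finset.card_fin, smul_eq_mul] at heven
      exact Nat.not_even_iff_odd.mpr this heven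
    refine ⟨j, fun i => ?_⟩
    have := hb i
    simp only [bsel, Nat.odd_iff.mp h, if_true]
    split_ifs with hij
    · subst hij
      exact hj
    · exact hb i

lemma mem_of_fineHom_eq_fiberSum {I : Ideal (R n k)} (hI : Jideal n k ≤ I)
    {f g : R n k} {u : Sym2 (Fin n) →₀ ℕ} {b : Fin n → ℕ} (hf : f ∈ I)
    (hfb : fineHom n k f = fiberSum k b) (hg : fineHom n k g = fiberSum k (VN n u + b)) :
    g ∈ I := by
  have sub_mem : g - monomial u 1 * f ∈ Jideal n k := by
    rw [sub_mem_Jideal_iff, hg, map_mul, hfb, fineHom_monomial_mul_fiberSum]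
  exact (Submodule.sub_mem_iff_left I (I.mul_mem_left _ hf)).mp (hI sub_mem)

lemma pplusAt_mem (hn : 1 < n) {b : Fin n → ℕ} (hb : ∀ i, n - 2 ≤ b i) (heven : Even (∑ i, b i)) :
    pplusAt n k b ∈ Jideal n k + Ideal.span (Set.range (pplus n k)) := by
  obtain ⟨j, hj⟩ := exists_bsel_le hn hb heven
  obtain ⟨u, rfl⟩ := exists_VN_add_eq hj (even_sum_bsel hn j) heven
  exact mem_of_fineHom_eq_fiberSum le_sup_left
    (Ideal.mem_sup_right (Ideal.subset_span ⟨j, rfl⟩)) (fineHom_pplusAt (sub_two_le_bsel j))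
    (fineHom_pplusAt hb)

theorem mem_of_isFiberConstant_fineHom (hn : 1 < n) {g : R n k}
    (hg : IsFiberConstant (fineHom n k g)) :
    g ∈ Jideal n k + Ideal.span (Set.range (pplus n k)) := by
  obtain ⟨B, c, hB, hsum⟩ := hg.eq_sum_smul_fiberSum
  have mem_fiber (b : Fin n → ℕ) (hb : b ∈ B) (ε) (hε : ε ∈ parities b) :
      ∃ u, fineDegree n u = (b, ε) :=
    exists_eq_of_coeff_mapDomain_ne_zero ((hB b hb).2 ε hε)
  have sub_two_le (b : Fin n → ℕ) (hb : b ∈ B) : ∀ i, n - 2 ≤ b i :=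
    sub_two_le_of_forall_parities (hB b hb).1 (mem_fiber b hb)
  have even_sum (b : Fin n → ℕ) (hb : b ∈ B) : Even (∑ i, b i) := by
    obtain ⟨ε, hε⟩ := (hB b hb).1
    obtain ⟨u, hu⟩ := mem_fiber b hb ε hε
    obtain rfl : VN n u = b := congrArg Prod.fst hu
    exact even_sum_VN u
  have sub_mem : g - ∑ b ∈ B, c b • pplusAt n k b ∈ Jideal n k := by
    rw [sub_mem_Jideal_iff, hsum, map_sum]
    refine Finset.sum_congr rfl fun b hb => ?_
    rw [map_smul, fineHom_pplusAt (sub_two_le b hb)]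
  have sum_mem : ∑ b ∈ B, c b • pplusAt n k b ∈
      Jideal n k + Ideal.span (Set.range (pplus n k)) :=
    Ideal.sum_mem _ fun b hb => Submodule.smul_of_tower_mem _ _
      (pplusAt_mem hn (sub_two_le b hb) (even_sum b hb))
  exact (Submodule.sub_mem_iff_left _ sum_mem).mp (Ideal.mem_sup_left sub_mem)

lemma mem_of_monomial_mul_mem (hn : 1 < n) {p g : R n k} {u : Sym2 (Fin n) →₀ ℕ} {b : Fin n → ℕ}
    (hp : fineHom n k p = fiberSum k b) (hg : monomial u 1 * g ∈ Jideal n k + Ideal.span {p}) :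
    g ∈ Jideal n k + Ideal.span (Set.range (pplus n k)) := by
  obtain ⟨f, hf, q, hq, hsum⟩ := Submodule.mem_sup.mp hg
  obtain ⟨h, rfl⟩ := Ideal.mem_span_singleton'.mp hq
  have fineHom_eq : fineHom n k (monomial u 1) * fineHom n k g = fineHom n k h * fiberSum k b := by
    rw [← map_mul, ← hsum, map_add, RingHom.mem_ker.mp (Jideal_le_ker_fineHom hf), zero_add,
      map_mul, hp]
  refine mem_of_isFiberConstant_fineHom hn (IsFiberConstant.of_monomial_mul (u := u) ?_)
  rw [fineHom_eq]
  exact isFiberConstant_fineHom_mul_fiberSum h b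

lemma monomial_mul_pplus_mem (hn : 1 < n) {p : R n k} {u w : Sym2 (Fin n) →₀ ℕ}
    (hp : fineHom n k p = fiberSum k (VN n w)) (hwu : VN n w ≤ VN n u) (j : Fin n) :
    monomial u 1 * pplus n k j ∈ Jideal n k + Ideal.span {p} := by
  have even_sum : Even (∑ i, (VN n u + bsel n j) i) := by
    simp only [Pi.add_apply, Finset.sum_add_distrib]
    exact (even_sum_VN u).add (even_sum_bsel hn j)
  obtain ⟨v, hv⟩ := exists_VN_add_eq (le_add_right hwu) (even_sum_VN w) even_sum
  refine mem_of_fineHom_eq_fiberSum (u := v) le_sup_left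
    (Ideal.mem_sup_right (Ideal.mem_span_singleton_self p)) hp ?_
  rw [map_mul, pplus, fineHom_pplusAt (sub_two_le_bsel j), fineHom_monomial_mul_fiberSum, hv]

lemma monomial_mul_mem (hn : 1 < n) {p g : R n k} {u w : Sym2 (Fin n) →₀ ℕ}
    (hp : fineHom n k p = fiberSum k (VN n w)) (hwu : VN n w ≤ VN n u)
    (hg : g ∈ Jideal n k + Ideal.span (Set.range (pplus n k))) :
    monomial u 1 * g ∈ Jideal n k + Ideal.span {p} := by
  have le_colon : Jideal n k + Ideal.span (Set.range (pplus n k)) ≤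
      (Jideal n k + Ideal.span {p}).colon {monomial u (1 : k)} := by
    refine sup_le (fun f hf => ?_) (Ideal.span_le.mpr ?_)
    · exact Submodule.mem_colon_singleton.mpr (Ideal.mul_mem_right _ _ (Ideal.mem_sup_left hf))
    · rintro _ ⟨j, rfl⟩
      rw [SetLike.mem_coe, Submodule.mem_colon_singleton, smul_eq_mul, mul_comm]
      exact monomial_mul_pplus_mem hn hp hwu j
  rw [mul_comm]
  exact Submodule.mem_colon_singleton.mp (le_colon hg)

variable (n k) in
lemma prod_X_pow_eq_monomial (m : ℕ) :
    (∏ s, X s : R n k) ^ m = monomial (m • ∑ s, Finsupp.single s 1) 1 := by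
  have prod_X : (∏ s, X s : R n k) = monomial (∑ s, Finsupp.single s 1) 1 :=
    (monomial_sum_one _ _).symm
  rw [prod_X, monomial_pow, one_pow]

lemma le_VN_of_forall_sum_le {b : Fin n → ℕ} {u : Sym2 (Fin n) →₀ ℕ} (hu : ∀ s, ∑ i, b i ≤ u s) :
    b ≤ VN n u := fun i =>
  calc
    b i ≤ ∑ i, b i := Finset.single_le_sum_of_canonicallyOrdered (Finset.mem_univ i)
    _ ≤ u s(i, i) := hu _
    _ ≤ VN n u i := by
      rw [VN_apply]
      exact Nat.le_add_left _ _

end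

/-- The saturation of `J_n + ⟨p_n⟩` with respect to the product of
all variables is `J_n + ⟨p⁺_{n,1}, …, p⁺_{n,n}⟩` (a single generator `p⁺_n` for even `n`). -/
theorem saturation_of_pn (n : ℕ) (hn : 3 ≤ n) (k : Type*) [Field k] :
    {g : R n k | ∃ m : ℕ,
        (∏ s : Sym2 (Fin n), X s) ^ m * g ∈
          Jideal n k + Ideal.span {pn n k (by omega)}} =
      ↑(Jideal n k + Ideal.span (Set.range (pplus n k))) := by
  obtain ⟨w, hw⟩ := exists_fineHom_pn_eq_fiberSum k (by lia : 0 < n)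
  ext g
  simp only [prod_X_pow_eq_monomial, Set.mem_ofPred_eq, SetLike.mem_coe]
  constructor
  · rintro ⟨m, hm⟩
    exact mem_of_monomial_mul_mem (by lia) hw hm
  · intro hg
    exact ⟨∑ i, VN n w i, monomial_mul_mem (by lia) hw
      (le_VN_of_forall_sum_le fun s => by simp [Finsupp.single_apply]) hg⟩

end Veronese
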